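/- (Laurie–Longstaff) Let L be a completely distributive commutative subspace lattice on a complex separable Hilbert space H, and let R_L denote the linear span of the rank one operators belonging to Alg L. Then R_L is dense in Alg L in the weak operator topology. -/

import Mathlib

open scoped InnerProductSpace

noncomputable section

/-- The join (closed linear span) of a family of subspaces of a Hilbert space. -/
def closedJoin {H : Type*} [NormedAddCommGroup H] [InnerProductSpace ℂ H]
    (S : Set (Submodule ℂ H)) : Submodule ℂ H :=
  (sSup S).topologicalClosure

/-- A subspace lattice on `H`: a family of closed subspaces containing `{0}` and `H`,
closed under arbitrary intersections and arbitrary closed linear spans. -/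
structure IsSubspaceLattice {H : Type*} [NormedAddCommGroup H] [InnerProductSpace ℂ H]
    (L : Set (Submodule ℂ H)) : Prop where
  isClosed : ∀ E ∈ L, IsClosed (E : Set H)
  bot_mem : ⊥ ∈ L
  top_mem : ⊤ ∈ L
  sInf_mem : ∀ S : Set (Submodule ℂ H), S ⊆ L → sInf S ∈ L
  join_mem : ∀ S : Set (Submodule ℂ H), S ⊆ L → closedJoin S ∈ L

/-- `M₋`: the join of all members of `L` that do not contain `M`. -/
def minus {H : Type*} [NormedAddCommGroup H] [InnerProductSpace ℂ H]
    (L : Set (Submodule ℂ H)) (M : Submodule ℂ H) : Submodule ℂ H :=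
  closedJoin {E | E ∈ L ∧ ¬ M ≤ E}

open Classical in
/-- The orthogonal projection of `H` onto a closed subspace `E`, as an operator on `H`
(junk value `0` if `E` is not closed). -/
def projOf {H : Type*} [NormedAddCommGroup H] [InnerProductSpace ℂ H] [CompleteSpace H]
    (E : Submodule ℂ H) : H →L[ℂ] H :=
  if h : IsClosed (E : Set H) then
    haveI : CompleteSpace E := h.completeSpace_coe
    E.subtypeL.comp (E.orthogonalProjectionOnto)
  else 0

/-- A commutative subspace lattice: the orthogonal projections onto members commute. -/
structure IsCSL {H : Type*} [NormedAddCommGroup H] [InnerProductSpace ℂ H] [CompleteSpace H]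
    (L : Set (Submodule ℂ H)) extends IsSubspaceLattice L : Prop where
  commutes : ∀ E ∈ L, ∀ F ∈ L, projOf E * projOf F = projOf F * projOf E

/-- Complete distributivity of the lattice `L` (meets are intersections, joins are
closed linear spans). -/
def IsCompletelyDistributive {H : Type*} [NormedAddCommGroup H] [InnerProductSpace ℂ H]
    (L : Set (Submodule ℂ H)) : Prop :=
  ∀ (I : Type) (J : I → Type) (E : (i : I) → J i → Submodule ℂ H),
    (∀ i j, E i j ∈ L) →
     ((⨅ i, closedJoin (Set.range (E i)))
        = closedJoin (Set.range fun φ : (∀ i, J i) => ⨅ i, E i (φ i)))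
    ∧ (closedJoin (Set.range fun i => ⨅ j, E i j)
        = ⨅ φ : (∀ i, J i), closedJoin (Set.range fun i => E i (φ i)))

/-- `Alg L`: all bounded operators leaving every member of `L` invariant. -/
def algL {H : Type*} [NormedAddCommGroup H] [InnerProductSpace ℂ H]
    (L : Set (Submodule ℂ H)) : Set (H →L[ℂ] H) :=
  {T | ∀ E ∈ L, ∀ x ∈ E, T x ∈ E}

/-- The rank one operator `x ⊗ f* : h ↦ ⟨h, f⟩ x`. -/
def rankOne {H : Type*} [NormedAddCommGroup H] [InnerProductSpace ℂ H]
    (x f : H) : H →L[ℂ] H :=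
  (innerSL ℂ f).smulRight x

/-- The rank of a bounded operator: the dimension of its range. -/
def opRank {H : Type*} [NormedAddCommGroup H] [InnerProductSpace ℂ H]
    (T : H →L[ℂ] H) : Cardinal :=
  Module.rank ℂ (LinearMap.range (T : H →ₗ[ℂ] H))

/-- `Φ` is a linear map of `Alg L` into itself. -/
structure IsLinearOnAlg {H : Type*} [NormedAddCommGroup H] [InnerProductSpace ℂ H]
    (L : Set (Submodule ℂ H)) (Φ : (H →L[ℂ] H) → (H →L[ℂ] H)) : Prop where
  maps : ∀ A ∈ algL L, Φ A ∈ algL L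
  map_add : ∀ A ∈ algL L, ∀ B ∈ algL L, Φ (A + B) = Φ A + Φ B
  map_smul : ∀ (c : ℂ), ∀ A ∈ algL L, Φ (c • A) = c • Φ A

/-- `Φ` preserves the rank of every finite rank operator in `Alg L`. -/
def RankPreserving {H : Type*} [NormedAddCommGroup H] [InnerProductSpace ℂ H]
    (L : Set (Submodule ℂ H)) (Φ : (H →L[ℂ] H) → (H →L[ℂ] H)) : Prop :=
  ∀ A ∈ algL L, opRank A < Cardinal.aleph0 → opRank (Φ A) = opRank A

/-- `a ∼ b`: (nonzero) vectors `a` and `b` are linearly dependent. -/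
def Dep {H : Type*} [NormedAddCommGroup H] [InnerProductSpace ℂ H] (a b : H) : Prop :=
  ∃ c : ℂ, c ≠ 0 ∧ b = c • a

/-- `N` is consistent with respect to `Φ`. -/
def Consistent {H : Type*} [NormedAddCommGroup H] [InnerProductSpace ℂ H]
    (L : Set (Submodule ℂ H)) (Φ : (H →L[ℂ] H) → (H →L[ℂ] H))
    (N : Submodule ℂ H) : Prop :=
  N ≠ ⊥ ∧ minus L N ≠ ⊤ ∧
    ∃ (U : N →ₗ[ℂ] H) (V : ((minus L N)ᗮ : Submodule ℂ H) →ₗ[ℂ] H),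
      ∀ (x : N) (f : ((minus L N)ᗮ : Submodule ℂ H)),
        Φ (rankOne (x : H) (f : H)) = rankOne (U x) (V f)

/-- `N` is twisted with respect to `Φ`. -/
def Twisted {H : Type*} [NormedAddCommGroup H] [InnerProductSpace ℂ H]
    (L : Set (Submodule ℂ H)) (Φ : (H →L[ℂ] H) → (H →L[ℂ] H))
    (N : Submodule ℂ H) : Prop :=
  N ≠ ⊥ ∧ minus L N ≠ ⊤ ∧
    ∃ (U : ((minus L N)ᗮ : Submodule ℂ H) →ₗ⋆[ℂ] H) (V : N →ₗ⋆[ℂ] H),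
      ∀ (x : N) (f : ((minus L N)ᗮ : Submodule ℂ H)),
        Φ (rankOne (x : H) (f : H)) = rankOne (U f) (V x)

/-- `N` is isolated: `dim N = 1` and `N^⊥ ∈ L`. -/
def Isolated {H : Type*} [NormedAddCommGroup H] [InnerProductSpace ℂ H]
    (L : Set (Submodule ℂ H)) (N : Submodule ℂ H) : Prop :=
  Module.rank ℂ N = 1 ∧ Nᗮ ∈ L

/-- The family `F` of all `N ∈ L` with `N ≠ {0}` and `N₋ ≠ H`. -/
def famF {H : Type*} [NormedAddCommGroup H] [InnerProductSpace ℂ H]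
    (L : Set (Submodule ℂ H)) : Set (Submodule ℂ H) :=
  {N | N ∈ L ∧ N ≠ ⊥ ∧ minus L N ≠ ⊤}

/-- Subspaces are comparable if one contains the other. -/
def Comparable' {H : Type*} [NormedAddCommGroup H] [InnerProductSpace ℂ H]
    (M N : Submodule ℂ H) : Prop :=
  M ≤ N ∨ N ≤ M

/-- There is a chain in `F` from `M` to `N`. -/
def ChainConn {H : Type*} [NormedAddCommGroup H] [InnerProductSpace ℂ H]
    (L : Set (Submodule ℂ H)) (M N : Submodule ℂ H) : Prop :=
  ∃ (n : ℕ) (c : Fin (n + 1) → Submodule ℂ H),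
    (∀ k, c k ∈ famF L) ∧ c 0 = M ∧ c (Fin.last n) = N ∧
      ∀ k : Fin n, Comparable' (c k.castSucc) (c k.succ)

/-- `𝔊_N`: all members of `F` that can be connected to `N` by a chain. -/
def GSet {H : Type*} [NormedAddCommGroup H] [InnerProductSpace ℂ H]
    (L : Set (Submodule ℂ H)) (N : Submodule ℂ H) : Set (Submodule ℂ H) :=
  {M | M ∈ famF L ∧ ChainConn L N M}

end

/-!
Since `Alg L` maps `R_L` into itself by left multiplication, it suffices to approximate the
identity on every finite family `y` of vectors. If this fails for `y`, let `z` be the component of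
`y` orthogonal to `{T ∘ y | T ∈ R_L}` in the Hilbert sum; then `z ≠ 0`, `∑ ⟪z i, T (y i)⟫ = 0` for
`T ∈ R_L`, and `∑ ⟪z i, Q (y i)⟫ = ∑ ‖Q (z i)‖ ^ 2` for every projection `Q` commuting with the
projections onto the members of `L`.

Choose such a `Q` with `Q ∘ z ≠ 0` and with as many linear relations among the `Q (z i)` as
possible: cutting `Q` down further either kills the family or keeps its relations. Complete
distributivity enters through Longstaff's condition `E = ⋂ {N₋ | N ∈ L, ¬ N ≤ E}`, which yields
`N ∈ L` such that neither `P = P_N Q` nor `R = (1 - P_{N₋}) Q` kills `z`, so that `P ∘ z` and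
`R ∘ z` satisfy the same relations. Testing `z` against the rank one operators
`P a ⊗ (R b)* ∈ Alg L` gives the relations `∑ ⟪R (y i), b⟫ • P (z i) = 0`, hence also
`∑ ⟪R (y i), b⟫ • R (z i) = 0`. So the matrix `⟪R (z i), R (y j)⟫` has square zero, and its trace
`∑ ⟪R (z i), R (y i)⟫ = ∑ ‖R (z i)‖ ^ 2` vanishes, a contradiction.
-/

section FiniteFamilies

variable {𝕜 H ι : Type*} [RCLike 𝕜] [NormedAddCommGroup H] [InnerProductSpace 𝕜 H] [Fintype ι]

theorem sum_inner_eq_zero_of_sum_inner_smul_eq_zero {v w : ι → H}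
    (h : ∀ g, ∑ i, ⟪w i, g⟫_𝕜 • v i = 0) : ∑ i, ⟪v i, w i⟫_𝕜 = 0 := by
  classical
  -- `∑ i, ⟪v i, w i⟫` is the trace of the matrix `M`, whose square vanishes.
  let M : Matrix ι ι 𝕜 := .of fun i j => ⟪v i, w j⟫_𝕜
  have hM : M ^ 2 = 0 := by
    ext i k
    calc (M ^ 2) i k = ⟪∑ j, ⟪w j, v i⟫_𝕜 • v j, w k⟫_𝕜 := by
          simp only [M, sq, Matrix.mul_apply, Matrix.of_apply, sum_inner, inner_smul_left,
            inner_conj_symm]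
      _ = 0 := by rw [h, inner_zero_left]
  exact (Matrix.isNilpotent_trace_of_isNilpotent ⟨2, hM⟩).eq_zero

theorem sum_inner_eq_zero_of_ker_linearCombination_le {u v w : ι → H}
    (hker : LinearMap.ker (Fintype.linearCombination 𝕜 u) ≤
      LinearMap.ker (Fintype.linearCombination 𝕜 v))
    (h : ∀ a b, ∑ i, ⟪u i, a⟫_𝕜 * ⟪b, w i⟫_𝕜 = 0) :
    ∑ i, ⟪v i, w i⟫_𝕜 = 0 := by
  refine sum_inner_eq_zero_of_sum_inner_smul_eq_zero (𝕜 := 𝕜) fun b => ?_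
  have hu : ∑ i, ⟪w i, b⟫_𝕜 • u i = 0 := by
    refine ext_inner_right 𝕜 fun a => ?_
    rw [sum_inner, inner_zero_left, ← h a b]
    refine Finset.sum_congr rfl fun i _ => ?_
    rw [inner_smul_left, inner_conj_symm, mul_comm]
  exact hker (x := fun i => ⟪w i, b⟫_𝕜) hu

theorem exists_mem_ker_linearCombination_mul_comp_eq {B : Set (H →L[𝕜] H)} {z : ι → H}
    (hB : ∃ Q ∈ B, Q ∘ z ≠ 0) :
    ∃ Q ∈ B, Q ∘ z ≠ 0 ∧ ∀ P : H →L[𝕜] H, P * Q ∈ B → (P * Q) ∘ z ≠ 0 →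
      LinearMap.ker (Fintype.linearCombination 𝕜 ((P * Q) ∘ z)) =
        LinearMap.ker (Fintype.linearCombination 𝕜 (Q ∘ z)) := by
  obtain ⟨Q, ⟨hQ, hQz⟩, hmax⟩ := exists_maximalFor_of_wellFoundedGT
    (fun Q : H →L[𝕜] H => Q ∈ B ∧ Q ∘ z ≠ 0)
    (fun Q => LinearMap.ker (Fintype.linearCombination 𝕜 (Q ∘ z))) hB
  refine ⟨Q, hQ, hQz, fun P hP hPz => ?_⟩
  have hle : LinearMap.ker (Fintype.linearCombination 𝕜 (Q ∘ z)) ≤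
      LinearMap.ker (Fintype.linearCombination 𝕜 ((P * Q) ∘ z)) := by
    intro c hc
    have hPc := congrArg P (LinearMap.mem_ker.1 hc)
    simpa [Fintype.linearCombination_apply] using hPc
  exact (hmax ⟨hP, hPz⟩ hle).antisymm hle

theorem exists_annihilator_of_notMem_closure [CompleteSpace H] {W : Submodule 𝕜 (H →L[𝕜] H)}
    {y : ι → H} (hy : y ∉ closure ((fun T : H →L[𝕜] H => T ∘ y) '' W)) :
    ∃ z : ι → H, z ≠ 0 ∧ (∀ T ∈ W, ∑ i, ⟪z i, T (y i)⟫_𝕜 = 0) ∧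
      ∀ Q : H →L[𝕜] H, IsSelfAdjoint Q → (∀ T ∈ W, Q * T ∈ W) →
        ∑ i, ⟪z i, Q (y i)⟫_𝕜 = ∑ i, ⟪z i, Q (z i)⟫_𝕜 := by
  let evalAt : (H →L[𝕜] H) →ₗ[𝕜] PiLp 2 fun _ : ι => H :=
    { toFun := fun T => WithLp.toLp 2 (T ∘ y)
      map_add' := fun _ _ => rfl
      map_smul' := fun _ _ => rfl }
  let V := W.map evalAt
  have hyV : WithLp.toLp 2 y ∉ V.topologicalClosure := fun hyV => hy <| by
    have h := map_mem_closure (PiLp.continuous_ofLp 2 fun _ : ι => H) hyV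
      (t := (fun T : H →L[𝕜] H => T ∘ y) '' W)
    exact h (by rintro _ ⟨T, hT, rfl⟩; exact ⟨T, hT, rfl⟩)
  have : CompleteSpace V.topologicalClosure := V.isClosed_topologicalClosure.completeSpace_coe
  let p := V.topologicalClosure.starProjection (WithLp.toLp 2 y)
  let z := WithLp.toLp 2 y - p
  have hp : p ∈ V.topologicalClosure := Submodule.starProjection_apply_mem _ _
  have hz : z ∈ Vᗮ := by
    rw [← V.orthogonal_closure]
    exact Submodule.sub_starProjection_mem_orthogonal _
  have hzT (T) (hT : T ∈ W) : ∑ i, ⟪z i, T (y i)⟫_𝕜 = 0 :=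
    calc ∑ i, ⟪z i, T (y i)⟫_𝕜 = ⟪z, evalAt T⟫_𝕜 := (PiLp.inner_apply z (evalAt T)).symm
      _ = 0 := Submodule.inner_left_of_mem_orthogonal (Submodule.mem_map_of_mem hT) hz
  refine ⟨z, fun hz0 => hyV ?_, hzT, fun Q hQ hQW => ?_⟩
  · have : WithLp.toLp 2 y = p := sub_eq_zero.1 (WithLp.ofLp_injective 2 hz0)
    exact this ▸ hp
  · have hsymm (a b : H) : ⟪Q a, b⟫_𝕜 = ⟪a, Q b⟫_𝕜 := hQ.isSymmetric a b
    have hQz : WithLp.toLp 2 (Q ∘ z) ∈ V.topologicalClosureᗮ := by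
      rw [V.orthogonal_closure, Submodule.mem_orthogonal']
      rintro _ ⟨T, hT, rfl⟩
      calc ⟪WithLp.toLp 2 (Q ∘ z), evalAt T⟫_𝕜 = ∑ i, ⟪Q (z i), T (y i)⟫_𝕜 :=
            PiLp.inner_apply _ _
        _ = ∑ i, ⟪z i, (Q * T) (y i)⟫_𝕜 := Finset.sum_congr rfl fun i _ => hsymm _ _
        _ = 0 := hzT _ (hQW T hT)
    have hQp : ∑ i, ⟪z i, Q (p i)⟫_𝕜 = 0 := by
      simpa only [PiLp.inner_apply, Function.comp_apply, hsymm] using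
        Submodule.inner_left_of_mem_orthogonal hp hQz
    have hyz (i : ι) : y i = z i + p i := (sub_add_cancel (y i) (p i)).symm
    simp only [hyz, map_add, inner_add_right, Finset.sum_add_distrib, hQp, add_zero]

end FiniteFamilies

section PointwiseClosure

theorem mem_closure_pi_of_forall_finset_restrict {ι : Type*} {X : ι → Type*}
    [∀ i, TopologicalSpace (X i)] {S : Set (∀ i, X i)} {f : ∀ i, X i}
    (h : ∀ s : Finset ι, s.restrict f ∈ closure (s.restrict '' S)) : f ∈ closure S := by
  refine mem_closure_iff.2 fun o ho hfo => ?_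
  obtain ⟨s, u, hu, hso⟩ := isOpen_pi_iff.1 ho f hfo
  have hopen : IsOpen (Set.univ.pi fun i : s => u i) :=
    isOpen_set_pi Set.finite_univ fun i _ => (hu i i.2).1
  obtain ⟨_, hg, g, hgS, rfl⟩ := mem_closure_iff.1 (h s) _ hopen fun i _ => (hu i i.2).2
  exact ⟨g, hso fun i hi => hg ⟨i, hi⟩ trivial, hgS⟩

theorem ofCLM_mem_closure_image_of_coe_mem_closure {𝕜 E F : Type*} [NormedField 𝕜]
    [AddCommGroup E] [TopologicalSpace E] [Module 𝕜 E]
    [AddCommGroup F] [TopologicalSpace F] [Module 𝕜 F]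
    [IsTopologicalAddGroup F] [ContinuousConstSMul 𝕜 F]
    {A : E →L[𝕜] F} {W : Set (E →L[𝕜] F)} (hA : ⇑A ∈ closure ((⇑) '' W : Set (E → F))) :
    ContinuousLinearMapWOT.ofCLM (σ := RingHom.id 𝕜) (E := E) (F := F) A ∈
      closure (ContinuousLinearMapWOT.ofCLM (σ := RingHom.id 𝕜) (E := E) (F := F) '' W) := by
  rw [ContinuousLinearMapWOT.isInducing_inducingFn.closure_eq_preimage_closure_image]
  let pairing (f : E → F) (p : E × StrongDual 𝕜 F) : 𝕜 := p.2 (f p.1)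
  have hpairing : Continuous pairing := by fun_prop
  refine map_mem_closure (f := pairing) hpairing hA ?_
  rintro _ ⟨T, hT, rfl⟩
  exact ⟨_, ⟨T, hT, rfl⟩, rfl⟩

end PointwiseClosure

section Lattice

variable {H : Type*} [NormedAddCommGroup H] [InnerProductSpace ℂ H]
  {L : Set (Submodule ℂ H)} {E N M : Submodule ℂ H}

theorem le_closedJoin {S : Set (Submodule ℂ H)} (hE : E ∈ S) : E ≤ closedJoin S :=
  (le_sSup hE).trans (Submodule.le_topologicalClosure _)

theorem closedJoin_le {S : Set (Submodule ℂ H)} (hE : IsClosed (E : Set H))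
    (h : ∀ K ∈ S, K ≤ E) : closedJoin S ≤ E :=
  Submodule.topologicalClosure_minimal _ (sSup_le h) hE

theorem IsSubspaceLattice.minus_mem (hL : IsSubspaceLattice L) (N : Submodule ℂ H) :
    minus L N ∈ L :=
  hL.join_mem _ fun _ hE => hE.1

theorem le_minus_of_not_le (hE : E ∈ L) (hNE : ¬ N ≤ E) : E ≤ minus L N :=
  le_closedJoin ⟨hE, hNE⟩

theorem IsSubspaceLattice.exists_notMem_orthogonal_and_notMem_minus (hL : IsSubspaceLattice L)
    (hinf : ∀ E ∈ L, sInf (minus L '' {N ∈ L | ¬ N ≤ E}) ≤ E) {w : H} (hw : w ≠ 0) :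
    ∃ N ∈ L, w ∉ Nᗮ ∧ w ∉ minus L N := by
  by_contra! hcon
  let E := closedJoin {K ∈ L | w ∈ Kᗮ}
  have hEL : E ∈ L := hL.join_mem _ fun _ hK => hK.1
  have hwE : w ∈ Eᗮ := by
    have hle : E ≤ (ℂ ∙ w)ᗮ := closedJoin_le (Submodule.isClosed_orthogonal _) fun K hK x hx =>
      Submodule.mem_orthogonal_singleton_iff_inner_left.2 (hK.2 x hx)
    exact fun x hx => Submodule.mem_orthogonal_singleton_iff_inner_left.1 (hle hx)
  have hwE' : w ∈ E := hinf E hEL <| by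
    rw [Submodule.mem_sInf]
    rintro _ ⟨N, ⟨hN, hNE⟩, rfl⟩
    exact hcon N hN fun hwN => hNE (le_closedJoin ⟨hN, hwN⟩)
  exact hw (inner_self_eq_zero.1 (hwE w hwE'))

theorem IsCompletelyDistributive.iInf_closedJoin_range_le (hcd : IsCompletelyDistributive L)
    {I : Type*} {J : I → Type*} [Small.{0} I] [∀ i, Small.{0} (J i)]
    {E : (i : I) → J i → Submodule ℂ H} (hE : ∀ i j, E i j ∈ L) :
    ⨅ i, closedJoin (Set.range (E i)) ≤
      closedJoin (Set.range fun φ : (∀ i, J i) => ⨅ i, E i (φ i)) := by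
  let e := (equivShrink I).symm
  let f (i : I) := (equivShrink (J i)).symm
  calc ⨅ i, closedJoin (Set.range (E i))
      = ⨅ i, closedJoin (Set.range (E (e i) ∘ f (e i))) := by
        simp only [(f _).surjective.range_comp]
        exact (e.iInf_comp (g := fun i => closedJoin (Set.range (E i)))).symm
    _ = closedJoin (Set.range fun φ : (∀ i, Shrink (J (e i))) => ⨅ i, E (e i) (f (e i) (φ i))) :=
        (hcd _ _ _ fun _ _ => hE _ _).1
    _ ≤ _ := by
        refine closedJoin_le (Submodule.isClosed_topologicalClosure _) ?_
        rintro _ ⟨φ, rfl⟩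
        have hφ (i : I) : ∃ j, ⨅ i', E (e i') (f (e i') (φ i')) ≤ E i j := by
          obtain ⟨i', rfl⟩ := e.surjective i
          exact ⟨_, iInf_le _ i'⟩
        choose ψ hψ using hφ
        exact (le_iInf hψ).trans (le_closedJoin ⟨ψ, rfl⟩)

theorem IsCompletelyDistributive.sInf_minus_le [Small.{0} L] (hcd : IsCompletelyDistributive L)
    (hL : IsSubspaceLattice L) (hE : E ∈ L) : sInf (minus L '' {N ∈ L | ¬ N ≤ E}) ≤ E := by
  let I := {N : L // ¬ (N : Submodule ℂ H) ≤ E}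
  let J (N : I) := {K : L // ¬ (N : Submodule ℂ H) ≤ K}
  calc sInf (minus L '' {N ∈ L | ¬ N ≤ E})
      ≤ ⨅ N : I, closedJoin (Set.range fun K : J N => (K : Submodule ℂ H)) := by
        refine le_iInf fun N => sInf_le ⟨N, ⟨N.1.2, N.2⟩, congrArg closedJoin ?_⟩
        ext K
        exact ⟨fun hK => ⟨⟨⟨K, hK.1⟩, hK.2⟩, rfl⟩, by rintro ⟨K, rfl⟩; exact ⟨K.1.2, K.2⟩⟩
    _ ≤ closedJoin (Set.range fun φ : (∀ N, J N) => ⨅ N, (φ N : Submodule ℂ H)) :=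
        hcd.iInf_closedJoin_range_le fun _ K => K.1.2
    _ ≤ E := by
        refine closedJoin_le (hL.isClosed E hE) ?_
        rintro _ ⟨φ, rfl⟩
        by_contra hle
        -- otherwise `φ` would have to choose, at the meet of its own values, a member of `L`
        -- not containing that meet
        have hmem : ⨅ N, (φ N : Submodule ℂ H) ∈ L :=
          hL.sInf_mem _ (by rintro _ ⟨N, rfl⟩; exact (φ N).1.2)
        exact (φ ⟨⟨_, hmem⟩, hle⟩).2 (iInf_le _ _)

theorem small_opens (X : Type*) [TopologicalSpace X] [SecondCountableTopology X] :
    Small.{0} (TopologicalSpace.Opens X) := by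
  let f (U : TopologicalSpace.Opens X) : Set (TopologicalSpace.countableBasis X) :=
    {b | (b : Set X) ⊆ U}
  refine small_of_injective (f := f) fun U V hUV => ?_
  refine TopologicalSpace.Opens.ext ?_
  have hbasis := TopologicalSpace.isBasis_countableBasis X
  rw [hbasis.open_eq_sUnion' U.isOpen, hbasis.open_eq_sUnion' V.isOpen]
  congr! 3 with b
  exact and_congr_right fun hb => Set.ext_iff.1 hUV ⟨b, hb⟩

theorem IsSubspaceLattice.small [TopologicalSpace.SeparableSpace H] (hL : IsSubspaceLattice L) :
    Small.{0} L := by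
  have : SecondCountableTopology H := UniformSpace.secondCountable_of_separable H
  have := small_opens H
  refine small_of_injective
    (f := fun E : L => (⟨(E : Set H)ᶜ, (hL.isClosed E E.2).isOpen_compl⟩ :
      TopologicalSpace.Opens H)) fun E F hEF => ?_
  exact Subtype.ext (SetLike.coe_injective (compl_injective (congrArg SetLike.coe hEF)))

end Lattice

section RankOneSpan

variable {H : Type*} [NormedAddCommGroup H] [InnerProductSpace ℂ H]
  {L : Set (Submodule ℂ H)} {N : Submodule ℂ H}

/-- The linear span `R_L` of the rank one operators belonging to `Alg L`. -/
def rankOneSpan (L : Set (Submodule ℂ H)) : Submodule ℂ (H →L[ℂ] H) :=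
  Submodule.span ℂ {T | T ∈ algL L ∧ ∃ x f : H, x ≠ 0 ∧ f ≠ 0 ∧ T = rankOne x f}

theorem rankOne_mem_rankOneSpan {x f : H} (h : rankOne x f ∈ algL L) :
    rankOne x f ∈ rankOneSpan L := by
  rcases eq_or_ne x 0 with rfl | hx
  · convert (rankOneSpan L).zero_mem
    ext; simp [rankOne]
  rcases eq_or_ne f 0 with rfl | hf
  · convert (rankOneSpan L).zero_mem
    ext; simp [rankOne]
  exact Submodule.subset_span ⟨h, x, f, hx, hf, rfl⟩

theorem rankOne_mem_algL {x f : H} (hx : x ∈ N) (hf : f ∈ (minus L N)ᗮ) :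
    rankOne x f ∈ algL L := by
  intro E hE h hh
  by_cases hNE : N ≤ E
  · exact E.smul_mem _ (hNE hx)
  · have : ⟪f, h⟫_ℂ = 0 :=
      Submodule.inner_left_of_mem_orthogonal (le_minus_of_not_le hE hNE hh) hf
    simp [rankOne, this]

theorem mul_mem_rankOneSpan {A T : H →L[ℂ] H} (hA : A ∈ algL L) (hT : T ∈ rankOneSpan L) :
    A * T ∈ rankOneSpan L := by
  induction hT using Submodule.span_induction with
  | mem T hT =>
    obtain ⟨hT, x, f, -, -, rfl⟩ := hT
    have hAx : A * rankOne x f = rankOne (A x) f := by ext; simp [rankOne]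
    rw [hAx]
    refine rankOne_mem_rankOneSpan (hAx ▸ fun E hE h hh => ?_)
    exact hA E hE _ (hT E hE h hh)
  | zero => simp
  | add T T' _ _ hT hT' => rw [mul_add]; exact add_mem hT hT'
  | smul c T _ hT => rw [mul_smul_comm]; exact Submodule.smul_mem _ c hT

end RankOneSpan

section Projections

variable {H : Type*} [NormedAddCommGroup H] [InnerProductSpace ℂ H] [CompleteSpace H]
  {L : Set (Submodule ℂ H)} {E N M : Submodule ℂ H} {Q : H →L[ℂ] H}

theorem exists_projOf_eq_starProjection (hE : IsClosed (E : Set H)) :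
    ∃ _ : E.HasOrthogonalProjection, projOf E = E.starProjection := by
  have : CompleteSpace E := hE.completeSpace_coe
  exact ⟨inferInstance, dif_pos hE⟩

theorem isStarProjection_projOf (hE : IsClosed (E : Set H)) : IsStarProjection (projOf E) := by
  obtain ⟨_, h⟩ := exists_projOf_eq_starProjection hE
  exact h ▸ isStarProjection_starProjection

theorem projOf_apply_mem (hE : IsClosed (E : Set H)) (x : H) : projOf E x ∈ E := by
  obtain ⟨_, h⟩ := exists_projOf_eq_starProjection hE
  exact h ▸ E.starProjection_apply_mem x

theorem sub_projOf_apply_mem_orthogonal (hE : IsClosed (E : Set H)) (x : H) :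
    x - projOf E x ∈ Eᗮ := by
  obtain ⟨_, h⟩ := exists_projOf_eq_starProjection hE
  exact h ▸ E.sub_starProjection_mem_orthogonal x

theorem projOf_apply_eq_self (hE : IsClosed (E : Set H)) {x : H} (hx : x ∈ E) :
    projOf E x = x := by
  obtain ⟨_, h⟩ := exists_projOf_eq_starProjection hE
  exact h ▸ E.starProjection_eq_self_iff.2 hx

/-- The orthogonal projections commuting with the projections onto the members of `L`. They are
the cut-down operators of the density argument: they lie in `Alg L` and, when `L` is commutative,
may be refined by multiplying with `projOf N` or `1 - projOf N` for `N ∈ L`. -/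
def reducingProjections (L : Set (Submodule ℂ H)) : Set (H →L[ℂ] H) :=
  {Q | IsStarProjection Q ∧ ∀ E ∈ L, Commute (projOf E) Q}

theorem one_mem_reducingProjections : 1 ∈ reducingProjections L :=
  ⟨.one _, fun _ _ => Commute.one_right _⟩

theorem IsSubspaceLattice.reducingProjections_subset_algL (hL : IsSubspaceLattice L) :
    reducingProjections L ⊆ algL L := by
  intro Q hQ E hE x hx
  have hQx : projOf E (Q x) = Q x :=
    calc projOf E (Q x) = Q (projOf E x) := DFunLike.congr_fun (hQ.2 E hE).eq x
      _ = Q x := by rw [projOf_apply_eq_self (hL.isClosed E hE) hx]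
  exact hQx ▸ projOf_apply_mem (hL.isClosed E hE) _

theorem IsCSL.projOf_mul_mem_reducingProjections (hL : IsCSL L) (hN : N ∈ L)
    (hQ : Q ∈ reducingProjections L) : projOf N * Q ∈ reducingProjections L :=
  ⟨(isStarProjection_projOf (hL.isClosed N hN)).mul hQ.1 (hQ.2 N hN),
    fun E hE => .mul_right (hL.commutes E hE N hN) (hQ.2 E hE)⟩

theorem IsCSL.one_sub_projOf_mul_mem_reducingProjections (hL : IsCSL L) (hM : M ∈ L)
    (hQ : Q ∈ reducingProjections L) : (1 - projOf M) * Q ∈ reducingProjections L :=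
  ⟨(isStarProjection_projOf (hL.isClosed M hM)).one_sub.mul hQ.1
      ((Commute.one_left Q).sub_left (hQ.2 M hM)),
    fun E hE => .mul_right ((Commute.one_right _).sub_right (hL.commutes E hE M hM)) (hQ.2 E hE)⟩

theorem inner_apply_apply_of_isStarProjection (hQ : IsStarProjection Q) (x y : H) :
    ⟪Q x, Q y⟫_ℂ = ⟪x, Q y⟫_ℂ :=
  calc ⟪Q x, Q y⟫_ℂ = ⟪x, (Q * Q) y⟫_ℂ := hQ.isSelfAdjoint.isSymmetric x (Q y)
    _ = ⟪x, Q y⟫_ℂ := by rw [hQ.isIdempotentElem.eq]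

end Projections

section Density

variable {H : Type*} [NormedAddCommGroup H] [InnerProductSpace ℂ H] [CompleteSpace H]
  {L : Set (Submodule ℂ H)} {N : Submodule ℂ H} {ι : Type*} [Fintype ι] {y z : ι → H}

theorem sum_inner_eq_zero_of_annihilates_rankOneSpan {P R : H →L[ℂ] H}
    (hz : ∀ T ∈ rankOneSpan L, ∑ i, ⟪z i, T (y i)⟫_ℂ = 0)
    (hP : IsSelfAdjoint P) (hPN : ∀ a, P a ∈ N)
    (hR : IsSelfAdjoint R) (hRN : ∀ b, R b ∈ (minus L N)ᗮ)
    (hker : LinearMap.ker (Fintype.linearCombination ℂ (P ∘ z)) ≤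
      LinearMap.ker (Fintype.linearCombination ℂ (R ∘ z))) :
    ∑ i, ⟪R (z i), R (y i)⟫_ℂ = 0 := by
  refine sum_inner_eq_zero_of_ker_linearCombination_le (v := R ∘ z) (w := R ∘ y)
    hker fun a b => ?_
  calc ∑ i, ⟪P (z i), a⟫_ℂ * ⟪b, R (y i)⟫_ℂ
      = ∑ i, ⟪z i, rankOne (P a) (R b) (y i)⟫_ℂ := by
        refine Finset.sum_congr rfl fun i _ => ?_
        have hPa : ⟪P (z i), a⟫_ℂ = ⟪z i, P a⟫_ℂ := hP.isSymmetric (z i) a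
        have hRb : ⟪b, R (y i)⟫_ℂ = ⟪R b, y i⟫_ℂ := (hR.isSymmetric b (y i)).symm
        rw [hPa, hRb, mul_comm]
        exact (inner_smul_right (z i) (P a) ⟪R b, y i⟫_ℂ).symm
    _ = 0 := hz _ (rankOne_mem_rankOneSpan (rankOne_mem_algL (hPN a) (hRN b)))

theorem IsCSL.eq_zero_of_annihilates_rankOneSpan (hL : IsCSL L)
    (hinf : ∀ E ∈ L, sInf (minus L '' {N ∈ L | ¬ N ≤ E}) ≤ E)
    (hz : ∀ T ∈ rankOneSpan L, ∑ i, ⟪z i, T (y i)⟫_ℂ = 0)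
    (hyz : ∀ Q ∈ reducingProjections L,
      ∑ i, ⟪z i, Q (y i)⟫_ℂ = ∑ i, ⟪z i, Q (z i)⟫_ℂ) : z = 0 := by
  by_contra hz0
  obtain ⟨Q, hQ, hQz, hstable⟩ :=
    exists_mem_ker_linearCombination_mul_comp_eq ⟨1, one_mem_reducingProjections, hz0⟩
  obtain ⟨i, hi⟩ := Function.ne_iff.1 hQz
  obtain ⟨N, hN, hiN, hiM⟩ := hL.exists_notMem_orthogonal_and_notMem_minus hinf hi
  have hM := hL.minus_mem N
  set P := projOf N * Q
  set R := (1 - projOf (minus L N)) * Q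
  have hP : P ∈ reducingProjections L := hL.projOf_mul_mem_reducingProjections hN hQ
  have hR : R ∈ reducingProjections L := hL.one_sub_projOf_mul_mem_reducingProjections hM hQ
  have hPz : P ∘ z ≠ 0 := fun h => hiN <| by
    have hsub := sub_projOf_apply_mem_orthogonal (hL.isClosed N hN) (Q (z i))
    rwa [show projOf N (Q (z i)) = 0 from congrFun h i, sub_zero] at hsub
  have hRz : R ∘ z ≠ 0 := fun h => hiM <| by
    have hfix : Q (z i) = projOf (minus L N) (Q (z i)) := sub_eq_zero.1 (congrFun h i)
    rw [Function.comp_apply, hfix]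
    exact projOf_apply_mem (hL.isClosed _ hM) _
  have hker := (hstable _ hP hPz).trans (hstable _ hR hRz).symm
  have hRR : ⟪WithLp.toLp 2 (R ∘ z), WithLp.toLp 2 (R ∘ z)⟫_ℂ = 0 :=
    calc ⟪WithLp.toLp 2 (R ∘ z), WithLp.toLp 2 (R ∘ z)⟫_ℂ
        = ∑ i, ⟪R (z i), R (z i)⟫_ℂ := PiLp.inner_apply _ _
      _ = ∑ i, ⟪R (z i), R (y i)⟫_ℂ := by
          simp only [inner_apply_apply_of_isStarProjection hR.1, hyz R hR]
      _ = 0 :=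
          sum_inner_eq_zero_of_annihilates_rankOneSpan hz hP.1.isSelfAdjoint
            (fun _ => projOf_apply_mem (hL.isClosed N hN) _) hR.1.isSelfAdjoint
            (fun _ => sub_projOf_apply_mem_orthogonal (hL.isClosed _ hM) _) hker.le
  exact hRz (congrArg WithLp.ofLp (inner_self_eq_zero.1 hRR))

theorem IsCSL.one_mem_closure_rankOneSpan (hL : IsCSL L)
    (hinf : ∀ E ∈ L, sInf (minus L '' {N ∈ L | ¬ N ≤ E}) ≤ E) :
    ⇑(1 : H →L[ℂ] H) ∈ closure ((⇑) '' (rankOneSpan L : Set (H →L[ℂ] H)) : Set (H → H)) := by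
  refine mem_closure_pi_of_forall_finset_restrict fun s => ?_
  rw [Set.image_image]
  by_contra hs
  obtain ⟨z, hz0, hz, hyz⟩ := exists_annihilator_of_notMem_closure hs
  exact hz0 <| hL.eq_zero_of_annihilates_rankOneSpan hinf hz fun Q hQ =>
    hyz Q hQ.1.isSelfAdjoint fun T hT =>
      mul_mem_rankOneSpan (hL.reducingProjections_subset_algL hQ) hT

theorem IsCSL.coe_mem_closure_rankOneSpan (hL : IsCSL L)
    (hinf : ∀ E ∈ L, sInf (minus L '' {N ∈ L | ¬ N ≤ E}) ≤ E) {A : H →L[ℂ] H} (hA : A ∈ algL L) :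
    ⇑A ∈ closure ((⇑) '' (rankOneSpan L : Set (H →L[ℂ] H)) : Set (H → H)) := by
  have hA' : Continuous fun f : H → H => A ∘ f := by fun_prop
  refine map_mem_closure (f := fun f : H → H => A ∘ f) hA' (hL.one_mem_closure_rankOneSpan hinf) ?_
  rintro _ ⟨T, hT, rfl⟩
  exact ⟨A * T, mul_mem_rankOneSpan hA hT, rfl⟩

end Density

theorem stmt_19_general {H : Type*} [NormedAddCommGroup H] [InnerProductSpace ℂ H]
    [CompleteSpace H] (L : Set (Submodule ℂ H)) (hL : IsCSL L)
    (hinf : ∀ E ∈ L, sInf (minus L '' {N ∈ L | ¬ N ≤ E}) ≤ E) :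
    ∀ A ∈ algL L,
      ContinuousLinearMapWOT.ofCLM (σ := RingHom.id ℂ) (E := H) (F := H) A ∈
        closure (ContinuousLinearMapWOT.ofCLM (σ := RingHom.id ℂ) (E := H) (F := H) ''
          (rankOneSpan L : Set (H →L[ℂ] H))) :=
  fun _ hA => ofCLM_mem_closure_image_of_coe_mem_closure (hL.coe_mem_closure_rankOneSpan hinf hA)

/-- (Laurie–Longstaff) The span of the rank one operators in `Alg L` is WOT-dense
in `Alg L`. -/
theorem stmt_19 {H : Type*} [NormedAddCommGroup H] [InnerProductSpace ℂ H]
    [CompleteSpace H] [TopologicalSpace.SeparableSpace H]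
    (L : Set (Submodule ℂ H)) (hL : IsCSL L) (hcd : IsCompletelyDistributive L) :
    ∀ A ∈ algL L,
      ContinuousLinearMapWOT.ofCLM (σ := RingHom.id ℂ) (E := H) (F := H) A ∈
        closure (ContinuousLinearMapWOT.ofCLM (σ := RingHom.id ℂ) (E := H) (F := H) ''
          (Submodule.span ℂ
            {T : H →L[ℂ] H | T ∈ algL L ∧ ∃ x f : H, x ≠ 0 ∧ f ≠ 0 ∧ T = rankOne x f} :
              Set (H →L[ℂ] H))) := by
  have := hL.toIsSubspaceLattice.small
  exact stmt_19_general L hL fun E hE => hcd.sInf_minus_le hL.toIsSubspaceLattice hE
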